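/- Let P ≥ 1, let k_1, …, k_P ≥ 1 with N ≥ max_j k_j + 1, let D_T be the second-difference operator on ℝ^N, and let D_{k_j}^{diff} be the seasonal differencing operator of period k_j. Let λ_T > 0 and λ_j^1, λ_j^2 > 0 for j = 1, …, P, and let Y ∈ ℝ^N. Then the objective F(T, S_1, …, S_P) = ‖Y − T − Σ_{j=1}^P S_j‖₂² + λ_T ‖D_T T‖₂² + Σ_{j=1}^P ( λ_j^1 ‖D_T S_j‖₂² + λ_j^2 ‖D_{k_j}^{diff} S_j‖₂² ) has exactly one minimizer over the constraint set {(T, S_1, …, S_P) ∈ (ℝ^N)^{P+1} : Σ_{t=1}^N S_{j,t} = 0 for every j = 1, …, P}. -/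

import Mathlib

/-!
The objective is a quadratic polynomial `F x = B x x - 2 ℓ x + c` on the product space, with `B`
a symmetric positive semidefinite bilinear form. On the centered subspace `B` is positive
definite: `B x x = 0` forces every seasonal component to be affine in `t` (its second difference
vanishes), hence constant (its seasonal difference, `k j` times the slope, vanishes), hence zero
(it is centered); the vanishing data term then kills the trend
(`eq_zero_of_secondDiff_of_seasonalDiff`, `normalForm_definite`). In finite dimension, a form that
is definite on a subspace represents `ℓ` there by some `x₀`, and completing the square gives
`F x = F x₀ + B (x - x₀) (x - x₀)`, so `x₀` is the unique minimizer.
-/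

open Matrix

/-- The second-difference operator `(D_T x)_t = x_{t+2} - 2 x_{t+1} + x_t`. -/
noncomputable def secondDiff (N : ℕ) : Matrix (Fin (N - 2)) (Fin N) ℝ :=
  fun t s =>
    if (s : ℕ) = (t : ℕ) then 1
    else if (s : ℕ) = (t : ℕ) + 1 then -2
    else if (s : ℕ) = (t : ℕ) + 2 then 1 else 0

/-- The seasonal differencing operator of period `k`: `(D x)_t = x_{t+k} - x_t`. -/
noncomputable def seasonalDiff (N k : ℕ) : Matrix (Fin (N - k)) (Fin N) ℝ :=
  fun t s =>
    if (s : ℕ) = (t : ℕ) + k then 1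
    else if (s : ℕ) = (t : ℕ) then -1 else 0

/-- The penalized objective with a second-difference penalty on the trend and both
second-difference and seasonal-differencing penalties on each seasonal component. -/
noncomputable def objFDiff {N : ℕ} (P : ℕ) (k : Fin P → ℕ) (lamT : ℝ) (lam1 lam2 : Fin P → ℝ)
    (Y : Fin N → ℝ) (x : (Fin N → ℝ) × (Fin P → Fin N → ℝ)) : ℝ :=
  (Y - x.1 - ∑ j, x.2 j) ⬝ᵥ (Y - x.1 - ∑ j, x.2 j)
    + lamT * ((secondDiff N *ᵥ x.1) ⬝ᵥ (secondDiff N *ᵥ x.1))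
    + ∑ j, (lam1 j * ((secondDiff N *ᵥ x.2 j) ⬝ᵥ (secondDiff N *ᵥ x.2 j))
        + lam2 j * ((seasonalDiff N (k j) *ᵥ x.2 j) ⬝ᵥ (seasonalDiff N (k j) *ᵥ x.2 j)))

/-- Riesz representation on a finite-dimensional subspace for a bilinear form that is anisotropic
there: the map from the subspace to its dual is injective, hence surjective. -/
lemma exists_representer {V : Type*} [AddCommGroup V] [Module ℝ V] [FiniteDimensional ℝ V]
    (W : Submodule ℝ V) (B : V →ₗ[ℝ] V →ₗ[ℝ] ℝ) (l : V →ₗ[ℝ] ℝ)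
    (hB : ∀ w ∈ W, B w w = 0 → w = 0) :
    ∃ x ∈ W, ∀ w ∈ W, B x w = l w := by
  let f : W →ₗ[ℝ] Module.Dual ℝ W := B.compl₁₂ W.subtype W.subtype
  have hf : Function.Injective f := by
    rw [← LinearMap.ker_eq_bot, LinearMap.ker_eq_bot']
    intro w hw
    have : B w w = 0 := by simpa [f] using LinearMap.congr_fun hw w
    exact Subtype.ext (hB w w.2 this)
  have hs : Function.Surjective f :=
    (LinearMap.injective_iff_surjective_of_finrank_eq_finrank
      (Subspace.dual_finrank_eq).symm).1 hf
  obtain ⟨x, hx⟩ := hs (l.comp W.subtype)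
  refine ⟨x, x.2, fun w hw => ?_⟩
  simpa [f] using LinearMap.congr_fun hx ⟨w, hw⟩

lemma secondDiff_mulVec (N : ℕ) (x : Fin N → ℝ) (t : ℕ) (ht : t + 2 < N) :
    (secondDiff N *ᵥ x) ⟨t, by omega⟩ =
      x ⟨t + 2, ht⟩ - 2 * x ⟨t + 1, by omega⟩ + x ⟨t, by omega⟩ := by
  have h : ∀ s : Fin N, secondDiff N ⟨t, by omega⟩ s * x s =
      (if s = ⟨t + 2, ht⟩ then x s else 0) - 2 * (if s = ⟨t + 1, by omega⟩ then x s else 0)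
        + (if s = ⟨t, by omega⟩ then x s else 0) := by
    intro s
    simp only [secondDiff, Fin.ext_iff]
    split_ifs <;> first | omega | ring
  simp only [mulVec, dotProduct, h, Finset.sum_add_distrib, Finset.sum_sub_distrib,
    ← Finset.mul_sum, Finset.sum_ite_eq', Finset.mem_univ, if_true]

lemma seasonalDiff_mulVec (N k : ℕ) (hk : 1 ≤ k) (x : Fin N → ℝ) (t : ℕ) (ht : t + k < N) :
    (seasonalDiff N k *ᵥ x) ⟨t, by omega⟩ = x ⟨t + k, ht⟩ - x ⟨t, by omega⟩ := by
  have h : ∀ s : Fin N, seasonalDiff N k ⟨t, by omega⟩ s * x s =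
      (if s = ⟨t + k, ht⟩ then x s else 0) - (if s = ⟨t, by omega⟩ then x s else 0) := by
    intro s
    simp only [seasonalDiff, Fin.ext_iff]
    split_ifs <;> first | omega | ring
  simp only [mulVec, dotProduct, h, Finset.sum_sub_distrib, Finset.sum_ite_eq', Finset.mem_univ,
    if_true]

/-- The kernel of the second difference consists of affine sequences. -/
lemma affine_of_secondDiff (N : ℕ) (h2 : 2 ≤ N) (x : Fin N → ℝ) (hx : secondDiff N *ᵥ x = 0)
    (t : ℕ) (ht : t < N) :
    x ⟨t, ht⟩ = x ⟨0, by omega⟩ + t * (x ⟨1, by omega⟩ - x ⟨0, by omega⟩) := by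
  induction t using Nat.strong_induction_on with
  | _ t ih =>
    match t, ht, ih with
    | 0, _, _ => simp
    | 1, _, _ => simp
    | t + 2, ht, ih =>
      have e := secondDiff_mulVec N x t ht
      rw [hx, Pi.zero_apply] at e
      have e0 := ih t (by omega) (by omega)
      have e1 := ih (t + 1) (by omega) (by omega)
      push_cast at e1 ⊢
      linear_combination -e + 2 * e1 - e0

lemma eq_zero_of_secondDiff_of_seasonalDiff (N k : ℕ) (hk : 1 ≤ k) (hN : k + 1 ≤ N)
    (x : Fin N → ℝ) (hx : secondDiff N *ᵥ x = 0) (hs : seasonalDiff N k *ᵥ x = 0)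
    (hc : ∑ t, x t = 0) : x = 0 := by
  have haff := affine_of_secondDiff N (by omega) x hx
  have hslope : x ⟨1, by omega⟩ - x ⟨0, by omega⟩ = 0 := by
    have e := seasonalDiff_mulVec N k hk x 0 (by omega)
    rw [hs, Pi.zero_apply, haff (0 + k) (by omega)] at e
    have hk' : (k : ℝ) ≠ 0 := by positivity
    apply (mul_eq_zero.1 (?_ : (k : ℝ) * _ = 0)).resolve_left hk'
    push_cast at e
    linear_combination -e
  have hconst : ∀ t : Fin N, x t = x ⟨0, by omega⟩ := fun t => by
    rw [haff t t.2, hslope, mul_zero, add_zero]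
  have h0 : x ⟨0, by omega⟩ = 0 := by
    rw [Finset.sum_congr rfl fun t _ => hconst t] at hc
    simpa [show N ≠ 0 by omega] using hc
  funext t
  rw [hconst t, h0, Pi.zero_apply]

/-- The reconstruction map `(T, S) ↦ T + Σ_j S_j`. -/
noncomputable def recon (N P : ℕ) : ((Fin N → ℝ) × (Fin P → Fin N → ℝ)) →ₗ[ℝ] (Fin N → ℝ) :=
  LinearMap.fst ℝ _ _ + ∑ j, LinearMap.proj j ∘ₗ LinearMap.snd ℝ _ _

lemma recon_apply (N P : ℕ) (x : (Fin N → ℝ) × (Fin P → Fin N → ℝ)) :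
    recon N P x = x.1 + ∑ j, x.2 j := by
  simp [recon]

/-- The semi-inner product `⟨u x, u z⟩` pulled back along a linear map `u` into `ℝ^n`. -/
noncomputable def pullDot {V : Type*} [AddCommGroup V] [Module ℝ V] {n : ℕ}
    (u : V →ₗ[ℝ] (Fin n → ℝ)) : V →ₗ[ℝ] V →ₗ[ℝ] ℝ :=
  (dotProductBilin ℝ ℝ).compl₁₂ u u

lemma pullDot_apply {V : Type*} [AddCommGroup V] [Module ℝ V] {n : ℕ}
    (u : V →ₗ[ℝ] (Fin n → ℝ)) (x z : V) : pullDot u x z = u x ⬝ᵥ u z := rfl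

/-- The quadratic part of the objective, as a symmetric bilinear form. -/
noncomputable def normalForm (N P : ℕ) (k : Fin P → ℕ) (lamT : ℝ) (lam1 lam2 : Fin P → ℝ) :
    ((Fin N → ℝ) × (Fin P → Fin N → ℝ)) →ₗ[ℝ] ((Fin N → ℝ) × (Fin P → Fin N → ℝ)) →ₗ[ℝ] ℝ :=
  pullDot (recon N P)
    + lamT • pullDot ((secondDiff N).mulVecLin ∘ₗ LinearMap.fst ℝ _ _)
    + ∑ j, (lam1 j • pullDot ((secondDiff N).mulVecLin ∘ₗ LinearMap.proj j ∘ₗ LinearMap.snd ℝ _ _)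
        + lam2 j • pullDot
            ((seasonalDiff N (k j)).mulVecLin ∘ₗ LinearMap.proj j ∘ₗ LinearMap.snd ℝ _ _))

lemma normalForm_apply (N P : ℕ) (k : Fin P → ℕ) (lamT : ℝ) (lam1 lam2 : Fin P → ℝ)
    (x z : (Fin N → ℝ) × (Fin P → Fin N → ℝ)) :
    normalForm N P k lamT lam1 lam2 x z =
      recon N P x ⬝ᵥ recon N P z + lamT * ((secondDiff N *ᵥ x.1) ⬝ᵥ (secondDiff N *ᵥ z.1))
    + ∑ j, (lam1 j * ((secondDiff N *ᵥ x.2 j) ⬝ᵥ (secondDiff N *ᵥ z.2 j))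
        + lam2 j * ((seasonalDiff N (k j) *ᵥ x.2 j) ⬝ᵥ (seasonalDiff N (k j) *ᵥ z.2 j))) := by
  simp [normalForm, pullDot_apply, LinearMap.sum_apply]

lemma normalForm_comm (N P : ℕ) (k : Fin P → ℕ) (lamT : ℝ) (lam1 lam2 : Fin P → ℝ)
    (x z : (Fin N → ℝ) × (Fin P → Fin N → ℝ)) :
    normalForm N P k lamT lam1 lam2 x z = normalForm N P k lamT lam1 lam2 z x := by
  simp only [normalForm_apply, dotProduct_comm (recon N P x),
    dotProduct_comm (secondDiff N *ᵥ x.1), dotProduct_comm (secondDiff N *ᵥ x.2 _),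
    dotProduct_comm (seasonalDiff N (k _) *ᵥ x.2 _)]

lemma dotProduct_self_nonneg_real {n : ℕ} (v : Fin n → ℝ) : 0 ≤ v ⬝ᵥ v :=
  Finset.sum_nonneg fun i _ => mul_self_nonneg (v i)

lemma normalForm_nonneg (N P : ℕ) (k : Fin P → ℕ) (lamT : ℝ) (hT : 0 < lamT)
    (lam1 lam2 : Fin P → ℝ) (h1 : ∀ j, 0 < lam1 j) (h2 : ∀ j, 0 < lam2 j)
    (x : (Fin N → ℝ) × (Fin P → Fin N → ℝ)) : 0 ≤ normalForm N P k lamT lam1 lam2 x x := by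
  rw [normalForm_apply]
  have := dotProduct_self_nonneg_real (recon N P x)
  have := mul_nonneg hT.le (dotProduct_self_nonneg_real (secondDiff N *ᵥ x.1))
  have : 0 ≤ ∑ j, (lam1 j * ((secondDiff N *ᵥ x.2 j) ⬝ᵥ (secondDiff N *ᵥ x.2 j))
      + lam2 j * ((seasonalDiff N (k j) *ᵥ x.2 j) ⬝ᵥ (seasonalDiff N (k j) *ᵥ x.2 j))) :=
    Finset.sum_nonneg fun j _ => add_nonneg
      (mul_nonneg (h1 j).le (dotProduct_self_nonneg_real _))
      (mul_nonneg (h2 j).le (dotProduct_self_nonneg_real _))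
  linarith

lemma normalForm_definite (N P : ℕ) (k : Fin P → ℕ) (hk : ∀ j, 1 ≤ k j) (hN : ∀ j, k j + 1 ≤ N)
    (lamT : ℝ) (hT : 0 < lamT)
    (lam1 lam2 : Fin P → ℝ) (h1 : ∀ j, 0 < lam1 j) (h2 : ∀ j, 0 < lam2 j)
    (x : (Fin N → ℝ) × (Fin P → Fin N → ℝ)) (hx : ∀ j, ∑ t, x.2 j t = 0)
    (h : normalForm N P k lamT lam1 lam2 x x = 0) : x = 0 := by
  rw [normalForm_apply] at h
  have p1 := dotProduct_self_nonneg_real (recon N P x)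
  have p2 := mul_nonneg hT.le (dotProduct_self_nonneg_real (secondDiff N *ᵥ x.1))
  have q1 := fun j => mul_nonneg (h1 j).le (dotProduct_self_nonneg_real (secondDiff N *ᵥ x.2 j))
  have q2 := fun j =>
    mul_nonneg (h2 j).le (dotProduct_self_nonneg_real (seasonalDiff N (k j) *ᵥ x.2 j))
  have p3 := Finset.sum_nonneg fun j (_ : j ∈ Finset.univ) => add_nonneg (q1 j) (q2 j)
  have hsum := (Finset.sum_eq_zero_iff_of_nonneg
    fun j (_ : j ∈ Finset.univ) => add_nonneg (q1 j) (q2 j)).1 (by linarith)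
  have hS : x.2 = 0 := by
    funext j
    have hj := hsum j (Finset.mem_univ j)
    have a1 := (mul_eq_zero.1 (by linarith [q1 j, q2 j] :
      lam1 j * ((secondDiff N *ᵥ x.2 j) ⬝ᵥ (secondDiff N *ᵥ x.2 j)) = 0)).resolve_left (h1 j).ne'
    have a2 := (mul_eq_zero.1 (by linarith [q1 j, q2 j] :
      lam2 j * ((seasonalDiff N (k j) *ᵥ x.2 j) ⬝ᵥ
        (seasonalDiff N (k j) *ᵥ x.2 j)) = 0)).resolve_left (h2 j).ne'
    exact eq_zero_of_secondDiff_of_seasonalDiff N (k j) (hk j) (hN j) _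
      (dotProduct_self_eq_zero.1 a1) (dotProduct_self_eq_zero.1 a2) (hx j)
  have hR : recon N P x = 0 := dotProduct_self_eq_zero.1 (by linarith)
  rw [recon_apply, hS] at hR
  exact Prod.ext (by simpa using hR) hS

lemma objFDiff_eq (N P : ℕ) (k : Fin P → ℕ) (lamT : ℝ) (lam1 lam2 : Fin P → ℝ) (Y : Fin N → ℝ)
    (x : (Fin N → ℝ) × (Fin P → Fin N → ℝ)) :
    objFDiff P k lamT lam1 lam2 Y x =
      normalForm N P k lamT lam1 lam2 x x - 2 * (Y ⬝ᵥ recon N P x) + Y ⬝ᵥ Y := by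
  rw [normalForm_apply, objFDiff, sub_sub, ← recon_apply]
  simp only [sub_dotProduct, dotProduct_sub, dotProduct_comm (recon N P x) Y]
  ring

/-- **Mixed differencing.** With a second-difference penalty on the trend and both
second-difference and seasonal-differencing penalties on each seasonal component, the penalized
objective has exactly one minimizer over the set of decompositions whose seasonal components
are centered (`Σ_t S_{j,t} = 0`). -/
theorem mixed_differencing_identifiable (N P : ℕ) (hP : 1 ≤ P)
    (k : Fin P → ℕ) (hk : ∀ j, 1 ≤ k j) (hN : ∀ j, k j + 1 ≤ N)
    (lamT : ℝ) (hT : 0 < lamT) (lam1 lam2 : Fin P → ℝ)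
    (h1 : ∀ j, 0 < lam1 j) (h2 : ∀ j, 0 < lam2 j) (Y : Fin N → ℝ) :
    ∃! x : (Fin N → ℝ) × (Fin P → Fin N → ℝ),
      (∀ j, ∑ t, x.2 j t = 0) ∧
      ∀ z : (Fin N → ℝ) × (Fin P → Fin N → ℝ), (∀ j, ∑ t, z.2 j t = 0) →
        objFDiff P k lamT lam1 lam2 Y x ≤ objFDiff P k lamT lam1 lam2 Y z := by
  let B := normalForm N P k lamT lam1 lam2
  let W : Submodule ℝ ((Fin N → ℝ) × (Fin P → Fin N → ℝ)) :=
    { carrier := {x | ∀ j, ∑ t, x.2 j t = 0}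
      add_mem' := fun {a b} ha hb j => by
        simp [Finset.sum_add_distrib, ha j, hb j]
      zero_mem' := fun j => by simp
      smul_mem' := fun c a ha j => by
        simp [← Finset.mul_sum, ha j] }
  have hdef : ∀ w ∈ W, B w w = 0 → w = 0 := fun w hw h =>
    normalForm_definite N P k hk hN lamT hT lam1 lam2 h1 h2 w hw h
  obtain ⟨x₀, hx₀, hrep⟩ := exists_representer W B (dotProductBilin ℝ ℝ Y ∘ₗ recon N P) hdef
  -- Completing the square around the representer.
  have hsq : ∀ z ∈ W, objFDiff P k lamT lam1 lam2 Y z =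
      objFDiff P k lamT lam1 lam2 Y x₀ + B (z - x₀) (z - x₀) := by
    intro z hz
    have e1 : B x₀ z = Y ⬝ᵥ recon N P z := hrep z hz
    have e2 : B x₀ x₀ = Y ⬝ᵥ recon N P x₀ := hrep x₀ hx₀
    have e3 : B z x₀ = B x₀ z := normalForm_comm N P k lamT lam1 lam2 z x₀
    have e4 : B (z - x₀) (z - x₀) = B z z - B z x₀ - (B x₀ z - B x₀ x₀) := by
      simp only [map_sub, LinearMap.sub_apply]
      ring
    rw [objFDiff_eq, objFDiff_eq, e4, e3, ← e1, ← e2]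
    ring
  refine ⟨x₀, ⟨hx₀, fun z hz => ?_⟩, fun z hz => ?_⟩
  · rw [hsq z hz]
    have := normalForm_nonneg N P k lamT hT lam1 lam2 h1 h2 (z - x₀)
    exact le_add_of_nonneg_right this
  · have hle := hz.2 x₀ hx₀
    rw [hsq z hz.1] at hle
    have hnn : 0 ≤ B (z - x₀) (z - x₀) :=
      normalForm_nonneg N P k lamT hT lam1 lam2 h1 h2 (z - x₀)
    exact sub_eq_zero.1 (hdef _ (W.sub_mem hz.1 hx₀) (by linarith))
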